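/- Fix integers g ≥ 1 and r, d ≥ 0, a nondecreasing tuple α ∈ ℤ_{≥0}^{r+1}, and a nonincreasing tuple β ∈ ℤ_{≥0}^{r+1} with ρ(g,r,d,α,β) = 1, and let (α^1,…,α^{g+1}) be a valid sequence for the data (g,r,d,α,β). Then there is exactly one index j ∈ {1,…,g} such that α^{j+1} − α^j = 1̲ + e_a − e_b for some indices a, b ∈ {0,…,r}, and for every other index i ∈ {1,…,g} with i ≠ j one has α^{i+1} − α^i = 1̲ − e_b for some b ∈ {0,…,r}. -/

import Mathlib

open scoped BigOperators

namespace BNpaper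

def ValidSeq (g r d : ℕ) (al be : Fin (r + 1) → ℤ) (A : ℕ → Fin (r + 1) → ℤ) : Prop :=
  (∀ i, 1 ≤ i → i ≤ g + 1 → (∀ t, 0 ≤ A i t) ∧ Monotone (A i)) ∧
  A 1 = al ∧
  (A (g + 1) = fun t => (d : ℤ) - (r : ℤ) - be t) ∧
  (∀ i, 1 ≤ i → i ≤ g → ∃ a : Fin (r + 1), ∀ t,
    (if t = a then (0 : ℤ) else 1) ≤ A (i + 1) t - A i t)

def rhoBN (g r d : ℕ) (al be : Fin (r + 1) → ℤ) : ℤ :=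
  (g : ℤ) - ((r : ℤ) + 1) * ((g : ℤ) - d + r) - (∑ t, al t) - (∑ t, be t)

/-! Measure a step `u = α^{i+1} - α^i ≥ 1 - e_b` by its excess `|u| - r`, the coordinate sum of
the nonnegative vector `u - (1 - e_b)`. A step has excess `0` iff it has the form `1 - e_b`, and
excess `1` iff it has the form `1 + e_a - e_b`. The excesses telescope to `ρ`; being nonnegative
integers with sum `1`, exactly one of them is `1` and all the others vanish. -/

theorem exists_eq_one_and_eq_zero_of_sum_eq_one {κ : Type*} {s : Finset κ} {f : κ → ℤ}
    (hf : ∀ i ∈ s, 0 ≤ f i) (hsum : ∑ i ∈ s, f i = 1) :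
    ∃ j ∈ s, f j = 1 ∧ ∀ i ∈ s, i ≠ j → f i = 0 := by
  classical
  obtain ⟨j, hj, hne⟩ := Finset.exists_ne_zero_of_sum_ne_zero (hsum.trans_ne one_ne_zero)
  have hf' : ∀ i ∈ s.erase j, 0 ≤ f i := fun i hi => hf i (Finset.mem_of_mem_erase hi)
  have hsplit : f j + ∑ i ∈ s.erase j, f i = 1 := (Finset.add_sum_erase s f hj).trans hsum
  have hpos : 0 < f j := (hf j hj).lt_of_ne' hne
  have hrest : 0 ≤ ∑ i ∈ s.erase j, f i := Finset.sum_nonneg hf'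
  have hzero : ∑ i ∈ s.erase j, f i = 0 := by omega
  exact ⟨j, hj, by omega, fun i hi hij =>
    (Finset.sum_eq_zero_iff_of_nonneg hf').1 hzero i (Finset.mem_erase.2 ⟨hij, hi⟩)⟩

theorem exists_eq_single_of_sum_eq_one {ι : Type*} [Fintype ι] [DecidableEq ι] {v : ι → ℤ}
    (hv : 0 ≤ v) (hsum : ∑ t, v t = 1) : ∃ a, v = Pi.single a 1 := by
  obtain ⟨a, -, ha, hzero⟩ := exists_eq_one_and_eq_zero_of_sum_eq_one (fun t _ => hv t) hsum
  refine ⟨a, funext fun t => ?_⟩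
  rcases eq_or_ne t a with rfl | hta
  · rw [ha, Pi.single_eq_same]
  · rw [hzero t (Finset.mem_univ t) hta, Pi.single_eq_of_ne hta]

/-- The defining condition on the differences `u = α^{i+1} - α^i` of a valid sequence, with
coordinates indexed by an arbitrary type: `u ≥ 1 - e_b` for some `b`. -/
def IsStep {ι : Type*} [DecidableEq ι] (u : ι → ℤ) : Prop :=
  ∃ b, 1 - Pi.single b 1 ≤ u

section Step

variable {ι : Type*} [Fintype ι]

/-- The amount by which the coordinate sum of a step exceeds the least possible one. The minimum
`|ι| - 1` is the number `r` when the coordinates are indexed by `{0, …, r}`. -/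
def excess (u : ι → ℤ) : ℤ :=
  ∑ t, u t - (Fintype.card ι - 1)

theorem sum_excess_sub {m n : ℕ} (hmn : m ≤ n) (A : ℕ → ι → ℤ) :
    ∑ i ∈ Finset.Ico m n, excess (A (i + 1) - A i)
      = ∑ t, A n t - ∑ t, A m t - (n - m) * (Fintype.card ι - 1) := by
  simp only [excess, Pi.sub_apply, Finset.sum_sub_distrib _ _ (s := Finset.univ)]
  rw [Finset.sum_sub_distrib, Finset.sum_Ico_sub (fun i => ∑ t, A i t) hmn, Finset.sum_const,
    Nat.card_Ico, nsmul_eq_mul, Nat.cast_sub hmn]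

variable [DecidableEq ι] {u : ι → ℤ}

theorem excess_eq_sum_sub (u : ι → ℤ) (b : ι) :
    excess u = ∑ t, (u - (1 - Pi.single b 1) : ι → ℤ) t := by
  simp [excess, Finset.sum_sub_distrib]

theorem excess_eq_zero_of_le_iff {b : ι} (hb : 1 - Pi.single b 1 ≤ u) :
    excess u = 0 ↔ u = 1 - Pi.single b 1 := by
  rw [excess_eq_sum_sub u b, Fintype.sum_eq_zero_iff_of_nonneg (sub_nonneg.2 hb), sub_eq_zero]

namespace IsStep

theorem excess_nonneg (hu : IsStep u) : 0 ≤ excess u := by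
  obtain ⟨b, hb⟩ := hu
  rw [excess_eq_sum_sub u b]
  exact Finset.sum_nonneg fun t _ => sub_nonneg.2 hb t

theorem excess_eq_zero_iff (hu : IsStep u) : excess u = 0 ↔ ∃ b, u = 1 - Pi.single b 1 := by
  obtain ⟨b, hb⟩ := hu
  exact ⟨fun h => ⟨b, (excess_eq_zero_of_le_iff hb).1 h⟩,
    fun ⟨_, h⟩ => (excess_eq_zero_of_le_iff h.ge).2 h⟩

theorem excess_eq_one_iff (hu : IsStep u) :
    excess u = 1 ↔ ∃ a b, u = 1 + Pi.single a 1 - Pi.single b 1 := by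
  constructor
  · obtain ⟨b, hb⟩ := hu
    intro h
    obtain ⟨a, ha⟩ := exists_eq_single_of_sum_eq_one (sub_nonneg.2 hb)
      ((excess_eq_sum_sub u b).symm.trans h)
    exact ⟨a, b, by rw [sub_eq_iff_eq_add.1 ha]; abel⟩
  · rintro ⟨a, b, rfl⟩
    simp [excess_eq_sum_sub _ b]

end IsStep

end Step

theorem stmt19_general {ι : Type*} [Fintype ι] [DecidableEq ι] {g : ℕ} {A : ℕ → ι → ℤ}
    (hstep : ∀ i, 1 ≤ i → i ≤ g → IsStep (A (i + 1) - A i))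
    (hsum : ∑ t, A (g + 1) t - ∑ t, A 1 t = g * (Fintype.card ι - 1) + 1) :
    ∃ j, 1 ≤ j ∧ j ≤ g ∧
      (∃ a b, A (j + 1) - A j = 1 + Pi.single a 1 - Pi.single b 1) ∧
      (∀ j', 1 ≤ j' → j' ≤ g →
        (∃ a b, A (j' + 1) - A j' = 1 + Pi.single a 1 - Pi.single b 1) → j' = j) ∧
      (∀ i, 1 ≤ i → i ≤ g → i ≠ j → ∃ b, A (i + 1) - A i = 1 - Pi.single b 1) := by
  have htotal : ∑ i ∈ Finset.Ico 1 (g + 1), excess (A (i + 1) - A i) = 1 := by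
    rw [sum_excess_sub (Nat.le_add_left 1 g), hsum]
    push_cast
    ring
  obtain ⟨j, hj, hone, hzero⟩ := exists_eq_one_and_eq_zero_of_sum_eq_one (fun i hi =>
    (hstep i (Finset.mem_Ico.1 hi).1 (Nat.le_of_lt_succ (Finset.mem_Ico.1 hi).2)).excess_nonneg)
    htotal
  simp only [Finset.mem_Ico, Nat.lt_succ_iff, and_imp] at hj hzero
  obtain ⟨hj1, hjg⟩ := hj
  refine ⟨j, hj1, hjg, (hstep j hj1 hjg).excess_eq_one_iff.1 hone, fun j' h1 hg h => ?_,
    fun i h1 hg hij => (hstep i h1 hg).excess_eq_zero_iff.1 (hzero i h1 hg hij)⟩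
  by_contra hne
  exact zero_ne_one ((hzero j' h1 hg hne).symm.trans ((hstep j' h1 hg).excess_eq_one_iff.2 h))

theorem ValidSeq.isStep_sub {g r d : ℕ} {al be : Fin (r + 1) → ℤ} {A : ℕ → Fin (r + 1) → ℤ}
    (hA : ValidSeq g r d al be A) {i : ℕ} (hi : 1 ≤ i) (hig : i ≤ g) :
    IsStep (A (i + 1) - A i) := by
  obtain ⟨b, hb⟩ := hA.2.2.2 i hi hig
  refine ⟨b, fun t => (le_of_eq ?_).trans (hb t)⟩
  by_cases htb : t = b <;> simp [htb]

theorem ValidSeq.sum_sub_sum_eq {g r d : ℕ} {al be : Fin (r + 1) → ℤ}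
    {A : ℕ → Fin (r + 1) → ℤ} (hA : ValidSeq g r d al be A) :
    ∑ t, A (g + 1) t - ∑ t, A 1 t
      = g * (Fintype.card (Fin (r + 1)) - 1) + rhoBN g r d al be := by
  obtain ⟨-, hfirst, hlast, -⟩ := hA
  simp only [hfirst, hlast, rhoBN, Finset.sum_sub_distrib, Finset.sum_const, Finset.card_univ,
    Fintype.card_fin, nsmul_eq_mul]
  push_cast
  ring

theorem stmt19 (g r d : ℕ) (hg : 1 ≤ g)
    (al be : Fin (r + 1) → ℤ) (hal0 : ∀ t, 0 ≤ al t) (halmono : Monotone al)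
    (hbe0 : ∀ t, 0 ≤ be t) (hbeanti : Antitone be)
    (hrho : rhoBN g r d al be = 1)
    (A : ℕ → Fin (r + 1) → ℤ) (hA : ValidSeq g r d al be A) :
    ∃ j, 1 ≤ j ∧ j ≤ g ∧
      (∃ a b : Fin (r + 1), ∀ t, A (j + 1) t - A j t
          = 1 + (if t = a then 1 else 0) - (if t = b then 1 else 0)) ∧
      (∀ j', 1 ≤ j' → j' ≤ g →
        (∃ a b : Fin (r + 1), ∀ t, A (j' + 1) t - A j' t
            = 1 + (if t = a then 1 else 0) - (if t = b then 1 else 0)) → j' = j) ∧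
      (∀ i, 1 ≤ i → i ≤ g → i ≠ j →
        ∃ b : Fin (r + 1), ∀ t, A (i + 1) t - A i t = 1 - (if t = b then 1 else 0)) := by
  simpa only [funext_iff, Pi.sub_apply, Pi.add_apply, Pi.one_apply, Pi.single_apply] using
    stmt19_general (fun _ => hA.isStep_sub) (hrho ▸ hA.sum_sub_sum_eq)

end BNpaper
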